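/- (Forward propagation at random initialization.) There exist absolute constants C, c > 0 such that, provided m ≥ C, for every ε ∈ (0,1], with probability at least 1 − C·n·L·e^{−c·m·ε²/L} over the random matrices A and W_1,…,W_L, one has ‖h_{i,ℓ}‖ ∈ [1 − ε, 1 + ε] for all i ∈ [n] and all ℓ ∈ {0, 1, …, L}. -/

import Mathlib

/-!
Given the earlier layers, the entries of `W_ℓ h_{ℓ-1}` are i.i.d. `N(0, 2‖h_{ℓ-1}‖²/m)`, so
`‖h_ℓ‖² - 1` is a martingale whose increments are sums of `m` independent centred sub-exponential
variables. While `‖h_{ℓ-1}‖² ≤ 2` they satisfy `E exp (t (‖h_ℓ‖² - ‖h_{ℓ-1}‖²)) ≤ exp (24 t² / m)`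
for `|t| ≤ m / 32`.

Freeze the martingale the first time it leaves `[-ε, ε]`. As `ε ≤ 1`, the bound `‖h_{ℓ-1}‖² ≤ 2`
holds whenever the frozen martingale moves, so its exponential moment after layer `L` is at most
`exp (24 t² (L + 1) / m)`. It ends inside `[-ε, ε]` exactly when `‖h_ℓ‖² - 1` stays there for every
`ℓ ≤ L`; hence a single two-sided Chernoff bound at `t = m ε / (48 (L + 1))` controls all layers at
once, and a union bound is needed over the samples only.
-/

open MeasureTheory ProbabilityTheory

noncomputable section

namespace DNNPaper

/-! ### Elementary linear algebra on plain function matrices -/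

def mulVec {p q : ℕ} (M : Fin p → Fin q → ℝ) (v : Fin q → ℝ) : Fin p → ℝ :=
  fun i => ∑ j, M i j * v j

def mmul {p q r : ℕ} (M : Fin p → Fin q → ℝ) (N : Fin q → Fin r → ℝ) :
    Fin p → Fin r → ℝ :=
  fun i k => ∑ j, M i j * N j k

def transpose {p q : ℕ} (M : Fin p → Fin q → ℝ) : Fin q → Fin p → ℝ :=
  fun j i => M i j

def dot {p : ℕ} (u v : Fin p → ℝ) : ℝ := ∑ i, u i * v i

def outer {p q : ℕ} (u : Fin p → ℝ) (v : Fin q → ℝ) : Fin p → Fin q → ℝ :=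
  fun i j => u i * v j

def idMat (p : ℕ) : Fin p → Fin p → ℝ := fun i j => if i = j then 1 else 0

def diagMat {p : ℕ} (dg : Fin p → ℝ) : Fin p → Fin p → ℝ :=
  fun i j => if i = j then dg i else 0

def relu {p : ℕ} (v : Fin p → ℝ) : Fin p → ℝ := fun k => max (v k) 0

/-- diagonal entries of the ReLU sign matrix of a pre-activation vector -/
def signOf {p : ℕ} (g : Fin p → ℝ) : Fin p → ℝ := fun k => if 0 ≤ g k then 1 else 0

/-- Euclidean norm -/
def l2 {p : ℕ} (v : Fin p → ℝ) : ℝ := Real.sqrt (∑ k, v k ^ 2)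

/-- max-norm -/
def linf {p : ℕ} (v : Fin p → ℝ) : ℝ := ⨆ k, |v k|

/-- number of nonzero entries -/
def l0 {p : ℕ} (v : Fin p → ℝ) : ℕ := (Finset.univ.filter fun k => v k ≠ 0).card

/-- Frobenius norm -/
def frob {p q : ℕ} (M : Fin p → Fin q → ℝ) : ℝ := Real.sqrt (∑ i, ∑ j, M i j ^ 2)

/-- spectral norm (ℓ₂ operator norm) -/
def spec {p q : ℕ} (M : Fin p → Fin q → ℝ) : ℝ :=
  sSup {r | ∃ v : Fin q → ℝ, l2 v ≤ 1 ∧ r = l2 (mulVec M v)}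

/-- trace (Frobenius) inner product -/
def innerF {p q : ℕ} (M N : Fin p → Fin q → ℝ) : ℝ := ∑ i, ∑ j, M i j * N i j

/-- `‖W‖₂ = max_ℓ ‖W_ℓ‖₂` for a tuple of matrices -/
def tupleSpec {m L : ℕ} (W : Fin L → Fin m → Fin m → ℝ) : ℝ := ⨆ ℓ, spec (W ℓ)

/-! ### The network -/

variable {𝔡 m d L : ℕ}

/-- `Wat W ℓ` is the weight matrix of layer `ℓ ∈ {1,…,L}` (identity outside this range). -/
def Wat (W : Fin L → Fin m → Fin m → ℝ) (ℓ : ℕ) : Fin m → Fin m → ℝ :=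
  if h : 1 ≤ ℓ ∧ ℓ ≤ L then W ⟨ℓ - 1, by omega⟩ else idMat m

/-- the forward (post-activation) vectors `h_ℓ`, `ℓ = 0,1,…,L` -/
def hseq (A : Fin m → Fin 𝔡 → ℝ) (W : Fin L → Fin m → Fin m → ℝ) (x : Fin 𝔡 → ℝ) :
    ℕ → Fin m → ℝ
  | 0 => relu (mulVec A x)
  | ℓ + 1 =>
      if ℓ + 1 ≤ L then relu (mulVec (Wat W (ℓ + 1)) (hseq A W x ℓ)) else hseq A W x ℓ

/-- the pre-activation vectors `g_ℓ`, `ℓ = 0,1,…,L` -/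
def gseq (A : Fin m → Fin 𝔡 → ℝ) (W : Fin L → Fin m → Fin m → ℝ) (x : Fin 𝔡 → ℝ) :
    ℕ → Fin m → ℝ
  | 0 => mulVec A x
  | ℓ + 1 => mulVec (Wat W (ℓ + 1)) (hseq A W x ℓ)

/-- `chainProd W Dfun a b = (D_b W_b) (D_{b-1} W_{b-1}) ⋯ (D_a W_a)` where `D_ℓ` is the
diagonal matrix with entries `Dfun ℓ`; it is the identity when `b < a`, and factors with
index outside `{1,…,L}` are skipped. -/
def chainProd (W : Fin L → Fin m → Fin m → ℝ) (Dfun : ℕ → Fin m → ℝ) (a : ℕ) :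
    ℕ → Fin m → Fin m → ℝ
  | 0 => idMat m
  | b + 1 =>
      if a ≤ b + 1 ∧ b + 1 ≤ L then
        mmul (mmul (diagMat (Dfun (b + 1))) (Wat W (b + 1))) (chainProd W Dfun a b)
      else chainProd W Dfun a b

/-- `prodDW A W x a b = D_b W_b D_{b-1} W_{b-1} ⋯ D_a W_a` with the sign matrices of input `x` -/
def prodDW (A : Fin m → Fin 𝔡 → ℝ) (W : Fin L → Fin m → Fin m → ℝ) (x : Fin 𝔡 → ℝ)
    (a b : ℕ) : Fin m → Fin m → ℝ :=
  chainProd W (fun ℓ => signOf (gseq A W x ℓ)) a b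

/-- `Back_ℓ = B D_L W_L ⋯ D_ℓ W_ℓ` (equal to `B` for `ℓ = L+1`) -/
def backMat (B : Fin d → Fin m → ℝ) (A : Fin m → Fin 𝔡 → ℝ)
    (W : Fin L → Fin m → Fin m → ℝ) (x : Fin 𝔡 → ℝ) (ℓ : ℕ) : Fin d → Fin m → ℝ :=
  mmul B (prodDW A W x ℓ L)

/-- formula gradient w.r.t. `W_ℓ` with an arbitrary (fake) loss vector `v`:
`D_ℓ (Back_{ℓ+1}ᵀ v) h_{ℓ-1}ᵀ` -/
def gradW (B : Fin d → Fin m → ℝ) (A : Fin m → Fin 𝔡 → ℝ)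
    (W : Fin L → Fin m → Fin m → ℝ) (x : Fin 𝔡 → ℝ) (v : Fin d → ℝ) (ℓ : ℕ) :
    Fin m → Fin m → ℝ :=
  outer (mulVec (diagMat (signOf (gseq A W x ℓ)))
      (mulVec (transpose (backMat B A W x (ℓ + 1))) v))
    (hseq A W x (ℓ - 1))

/-- loss vector `B h_L − y` -/
def lossVec (B : Fin d → Fin m → ℝ) (A : Fin m → Fin 𝔡 → ℝ)
    (W : Fin L → Fin m → Fin m → ℝ) (x : Fin 𝔡 → ℝ) (y : Fin d → ℝ) : Fin d → ℝ :=
  fun j => mulVec B (hseq A W x L) j - y j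

/-- per-sample ℓ₂ regression loss `F_i` -/
def objFi (B : Fin d → Fin m → ℝ) (A : Fin m → Fin 𝔡 → ℝ)
    (W : Fin L → Fin m → Fin m → ℝ) (x : Fin 𝔡 → ℝ) (y : Fin d → ℝ) : ℝ :=
  (1 / 2) * l2 (lossVec B A W x y) ^ 2

/-- total objective `F` -/
def objF {n : ℕ} (B : Fin d → Fin m → ℝ) (A : Fin m → Fin 𝔡 → ℝ)
    (W : Fin L → Fin m → Fin m → ℝ) (x : Fin n → Fin 𝔡 → ℝ)
    (y : Fin n → Fin d → ℝ) : ℝ :=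
  ∑ i, objFi B A W (x i) (y i)

/-- formula gradient of the total objective w.r.t. `W_ℓ` -/
def gradF {n : ℕ} (B : Fin d → Fin m → ℝ) (A : Fin m → Fin 𝔡 → ℝ)
    (W : Fin L → Fin m → Fin m → ℝ) (x : Fin n → Fin 𝔡 → ℝ)
    (y : Fin n → Fin d → ℝ) (ℓ : ℕ) : Fin m → Fin m → ℝ :=
  ∑ i, gradW B A W (x i) (lossVec B A W (x i) (y i)) ℓ

/-! ### Random initialization -/

/-- a `p × q` random matrix with i.i.d. `N(0, v)` entries -/
def gaussMat (p q : ℕ) (v : NNReal) : Measure (Fin p → Fin q → ℝ) :=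
  Measure.pi fun _ => Measure.pi fun _ => gaussianReal 0 v

/-- joint law of `(A, W)` at random initialization -/
def initAW (𝔡 m L : ℕ) :
    Measure ((Fin m → Fin 𝔡 → ℝ) × (Fin L → Fin m → Fin m → ℝ)) :=
  (gaussMat m 𝔡 (2 / m)).prod (Measure.pi fun _ : Fin L => gaussMat m m (2 / m))

/-- joint law of `(A, W, B)` at random initialization -/
def initMeasure (𝔡 m d L : ℕ) :
    Measure ((Fin m → Fin 𝔡 → ℝ) ×
      (Fin L → Fin m → Fin m → ℝ) × (Fin d → Fin m → ℝ)) :=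
  (gaussMat m 𝔡 (2 / m)).prod
    ((Measure.pi fun _ : Fin L => gaussMat m m (2 / m)).prod (gaussMat d m (1 / d)))

/-! ### Exponential moments -/

section ExponentialMoments

variable {Ω Ω' : Type*} {mΩ : MeasurableSpace Ω} {mΩ' : MeasurableSpace Ω'} {μ : Measure Ω}
  {X : Ω → ℝ} {t : ℝ}

/-- The moment generating function as a lower Lebesgue integral: unlike `ProbabilityTheory.mgf`
it is `∞`, not `0`, when `exp (t X)` is not integrable, so upper bounds on it are meaningful
without integrability hypotheses. -/
def lmgf (X : Ω → ℝ) (μ : Measure Ω) (t : ℝ) : ENNReal :=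
  ∫⁻ ω, ENNReal.ofReal (Real.exp (t * X ω)) ∂μ

lemma lmgf_add_const (X : Ω → ℝ) (μ : Measure Ω) (t c : ℝ) :
    lmgf (fun ω => X ω + c) μ t = lmgf X μ t * ENNReal.ofReal (Real.exp (t * c)) := by
  simp only [lmgf, mul_add, Real.exp_add, ENNReal.ofReal_mul (Real.exp_nonneg _)]
  exact lintegral_mul_const' _ _ ENNReal.ofReal_ne_top

lemma lmgf_neg (X : Ω → ℝ) (μ : Measure Ω) (t : ℝ) :
    lmgf (fun ω => -X ω) μ t = lmgf X μ (-t) := by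
  simp only [lmgf, mul_neg, neg_mul]

lemma lmgf_map {f : Ω → Ω'} (hf : Measurable f) {X : Ω' → ℝ} (hX : Measurable X) :
    lmgf X (μ.map f) t = lmgf (X ∘ f) μ t :=
  lintegral_map (by fun_prop) hf

lemma lmgf_sum_pi {ι : Type*} [Fintype ι] {E : ι → Type*} [∀ i, MeasurableSpace (E i)]
    (μ : ∀ i, Measure (E i)) [∀ i, IsProbabilityMeasure (μ i)] {X : ∀ i, E i → ℝ}
    (hX : ∀ i, Measurable (X i)) (t : ℝ) :
    lmgf (fun ω => ∑ i, X i (ω i)) (Measure.pi μ) t = ∏ i, lmgf (X i) (μ i) t := by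
  have hexp : ∀ i, Measurable fun y : E i => ENNReal.ofReal (Real.exp (t * X i y)) :=
    fun i => by fun_prop
  simp only [lmgf, Finset.mul_sum, Real.exp_sum,
    ENNReal.ofReal_prod_of_nonneg fun _ _ => Real.exp_nonneg _]
  rw [lintegral_prod_eq_prod_lintegral_of_indepFun Finset.univ _
    (iIndepFun_pi fun i => (hexp i).aemeasurable) fun i => (hexp i).comp (measurable_pi_apply i)]
  exact Finset.prod_congr rfl fun i _ => (measurePreserving_eval μ i).lintegral_comp (hexp i)

/-- `hXY` compares the exponential moments conditionally on all coordinates but the `i`-th. -/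
lemma lmgf_pi_le_mul {ι : Type*} [Fintype ι] [DecidableEq ι] {E : ι → Type*}
    [∀ i, MeasurableSpace (E i)] (μ : ∀ i, Measure (E i)) [∀ i, IsProbabilityMeasure (μ i)]
    {X Y : (∀ i, E i) → ℝ} (hX : Measurable X) (hY : Measurable Y) (i : ι) {K : ENNReal}
    (hYi : ∀ W w, Y (Function.update W i w) = Y W)
    (hXY : ∀ W, lmgf (fun w => X (Function.update W i w)) (μ i) t ≤
      K * ENNReal.ofReal (Real.exp (t * Y W))) :
    lmgf X (Measure.pi μ) t ≤ K * lmgf Y (Measure.pi μ) t := by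
  rw [lmgf, lmgf, ← lintegral_const_mul K (by fun_prop)]
  refine lintegral_le_of_lmarginal_le {i} (by fun_prop) (by fun_prop) fun W => ?_
  simp only [lmarginal_singleton, hYi, lintegral_const, measure_univ, mul_one]
  exact hXY W

lemma measure_le_le_lmgf_mul_exp (hX : AEMeasurable X μ) (ht : 0 ≤ t) (ε : ℝ) :
    μ {ω | ε ≤ X ω} ≤ lmgf X μ t * ENNReal.ofReal (Real.exp (-(t * ε))) := by
  rw [← mul_neg, ← lmgf_add_const]
  refine meas_le_lintegral₀ (by fun_prop) fun ω (hω : ε ≤ X ω) => ?_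
  exact ENNReal.one_le_ofReal.mpr (Real.one_le_exp (mul_nonneg ht (by linarith)))

lemma measure_le_abs_le_lmgf_mul_exp (hX : AEMeasurable X μ) (ht : 0 ≤ t) (ε : ℝ) :
    μ {ω | ε ≤ |X ω|} ≤
      (lmgf X μ t + lmgf X μ (-t)) * ENNReal.ofReal (Real.exp (-(t * ε))) := by
  have hunion : {ω | ε ≤ |X ω|} = {ω | ε ≤ X ω} ∪ {ω | ε ≤ -X ω} :=
    Set.ext fun ω => le_abs (a := ε) (b := X ω)
  rw [hunion, add_mul, ← lmgf_neg]
  exact (measure_union_le _ _).trans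
    (add_le_add (measure_le_le_lmgf_mul_exp hX ht ε) (measure_le_le_lmgf_mul_exp hX.neg ht ε))

lemma ofReal_one_sub_card_mul_le_measure_forall {ι : Type*} [Fintype ι] [IsProbabilityMeasure μ]
    {p : ι → Ω → Prop} {δ : ℝ} (hδ : 0 ≤ δ)
    (hp : ∀ i, μ {ω | ¬ p i ω} ≤ ENNReal.ofReal δ) :
    ENNReal.ofReal (1 - Fintype.card ι * δ) ≤ μ {ω | ∀ i, p i ω} := by
  have hcompl : {ω | ∀ i, p i ω}ᶜ = ⋃ i, {ω | ¬ p i ω} := by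
    ext ω
    simp
  have hbad : μ {ω | ∀ i, p i ω}ᶜ ≤ ENNReal.ofReal (Fintype.card ι * δ) := by
    calc μ {ω | ∀ i, p i ω}ᶜ ≤ ∑ i, μ {ω | ¬ p i ω} := hcompl ▸ measure_iUnion_fintype_le _ _
      _ ≤ ∑ _i : ι, ENNReal.ofReal δ := Finset.sum_le_sum fun i _ => hp i
      _ = ENNReal.ofReal (Fintype.card ι * δ) := by
        simp [ENNReal.ofReal_mul]
  rw [ENNReal.ofReal_sub _ (by positivity), ENNReal.ofReal_one, tsub_le_iff_right]
  calc 1 = μ ({ω | ∀ i, p i ω} ∪ {ω | ∀ i, p i ω}ᶜ) := by rw [Set.union_compl_self, measure_univ]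
    _ ≤ μ {ω | ∀ i, p i ω} + μ {ω | ∀ i, p i ω}ᶜ := measure_union_le _ _
    _ ≤ _ := by gcongr

end ExponentialMoments

/-! ### Gaussian squares -/

lemma lmgf_sq_gaussianReal {v : NNReal} {t : ℝ} (ht : t * v < 1 / 2) :
    lmgf (fun g => g ^ 2) (gaussianReal 0 v) t = ENNReal.ofReal (√(1 - 2 * (t * v)))⁻¹ := by
  rcases eq_or_ne v 0 with rfl | hv
  · simp [lmgf, gaussianReal_zero_var]
  have hb : 0 < (1 - 2 * (t * v)) / (2 * v) := div_pos (by linarith) (by positivity)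
  have hdensity : ∀ g : ℝ, gaussianPDF 0 v g * ENNReal.ofReal (Real.exp (t * g ^ 2)) =
      ENNReal.ofReal
        ((√(2 * Real.pi * v))⁻¹ * Real.exp (-((1 - 2 * (t * v)) / (2 * v)) * g ^ 2)) := by
    intro g
    rw [gaussianPDF, gaussianPDFReal, ← ENNReal.ofReal_mul (by positivity), mul_assoc,
      ← Real.exp_add]
    congr 3
    field_simp
    ring
  rw [lmgf, gaussianReal_of_var_ne_zero 0 hv,
    lintegral_withDensity_eq_lintegral_mul _ (measurable_gaussianPDF 0 v) (by fun_prop)]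
  simp only [Pi.mul_apply, hdensity]
  rw [← ofReal_integral_eq_lintegral_ofReal ((integrable_exp_neg_mul_sq hb).const_mul _)
    (ae_of_all _ fun g => by positivity), integral_const_mul, integral_gaussian,
    ← Real.sqrt_inv, ← Real.sqrt_inv, ← Real.sqrt_mul (by positivity)]
  congr 2
  field_simp

/-- The Taylor polynomial is `1 + u + 3/2 u²`; doubling its last term absorbs the remainder. -/
lemma inv_sqrt_one_sub_two_mul_le {u : ℝ} (hu : |u| ≤ 1 / 8) :
    (√(1 - 2 * u))⁻¹ ≤ 1 + u + 3 * u ^ 2 := by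
  obtain ⟨hu₁, hu₂⟩ := abs_le.mp hu
  have hpos : 0 < 1 - 2 * u := by linarith
  have hcubic : 0 ≤ 3 - 8 * u - 3 * u ^ 2 - 18 * u ^ 3 := by
    have : u ^ 2 ≤ 1 / 64 := by nlinarith
    nlinarith [mul_nonneg (sq_nonneg u) (by linarith : 0 ≤ 1 / 8 - u)]
  have hfactor : (1 - 2 * u) * (1 + u + 3 * u ^ 2) ^ 2 - 1 =
      u ^ 2 * (3 - 8 * u - 3 * u ^ 2 - 18 * u ^ 3) := by ring
  rw [← Real.sqrt_inv, Real.sqrt_le_left (by nlinarith), inv_le_iff_one_le_mul₀' hpos]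
  linarith [hfactor, mul_nonneg (sq_nonneg u) hcubic]

/-- Symmetrize: `exp (t (g⁺)²) + exp (t ((-g)⁺)²) = 1 + exp (t g²)`. -/
lemma two_mul_lmgf_max_zero_sq (μ : Measure ℝ) [IsProbabilityMeasure μ] [μ.IsNegInvariant]
    (t : ℝ) :
    2 * lmgf (fun g => max g 0 ^ 2) μ t = 1 + lmgf (fun g => g ^ 2) μ t := by
  have hsymm : ∀ g : ℝ, ENNReal.ofReal (Real.exp (t * max g 0 ^ 2)) +
      ENNReal.ofReal (Real.exp (t * max (-g) 0 ^ 2)) =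
        1 + ENNReal.ofReal (Real.exp (t * g ^ 2)) := by
    intro g
    rcases le_total g 0 with hg | hg
    · simp [max_eq_right hg, max_eq_left (neg_nonneg.mpr hg)]
    · simp [max_eq_left hg, max_eq_right (neg_nonpos.mpr hg), add_comm]
  calc 2 * lmgf (fun g => max g 0 ^ 2) μ t
      = lmgf (fun g => max g 0 ^ 2) μ t + lmgf (fun g => max (-g) 0 ^ 2) μ t := by
        rw [two_mul]
        congr 1
        exact (lintegral_neg_eq_self (μ := μ)
          fun g => ENNReal.ofReal (Real.exp (t * max g 0 ^ 2))).symm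
    _ = ∫⁻ g, (1 + ENNReal.ofReal (Real.exp (t * g ^ 2))) ∂μ := by
        rw [lmgf, lmgf, ← lintegral_add_left (by fun_prop)]
        simp only [hsymm]
    _ = 1 + lmgf (fun g => g ^ 2) μ t := by
        rw [lintegral_add_left measurable_const, lintegral_one, measure_univ, lmgf]

instance isNegInvariant_gaussianReal_zero (v : NNReal) : (gaussianReal 0 v).IsNegInvariant :=
  ⟨by simpa using! gaussianReal_map_neg (μ := 0) (v := v)⟩

lemma lmgf_max_zero_sq_gaussianReal_le {v : NNReal} {t : ℝ} (ht : |t * v| ≤ 1 / 8) :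
    lmgf (fun g => max g 0 ^ 2) (gaussianReal 0 v) t ≤
      ENNReal.ofReal (Real.exp (t * v / 2 + 3 / 2 * (t * v) ^ 2)) := by
  set u : ℝ := t * v
  have hu : u ≤ 1 / 8 := (abs_le.mp ht).2
  have htwo : 2 * lmgf (fun g => max g 0 ^ 2) (gaussianReal 0 v) t ≤
      2 * ENNReal.ofReal (Real.exp (u / 2 + 3 / 2 * u ^ 2)) := by
    calc 2 * lmgf (fun g => max g 0 ^ 2) (gaussianReal 0 v) t
        = 1 + ENNReal.ofReal (√(1 - 2 * u))⁻¹ := by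
          rw [two_mul_lmgf_max_zero_sq, lmgf_sq_gaussianReal (by linarith)]
      _ = ENNReal.ofReal (1 + (√(1 - 2 * u))⁻¹) := by
          rw [ENNReal.ofReal_add zero_le_one (by positivity), ENNReal.ofReal_one]
      _ ≤ ENNReal.ofReal (2 * Real.exp (u / 2 + 3 / 2 * u ^ 2)) := by
          apply ENNReal.ofReal_le_ofReal
          linarith [inv_sqrt_one_sub_two_mul_le ht, Real.add_one_le_exp (u / 2 + 3 / 2 * u ^ 2)]
      _ = 2 * ENNReal.ofReal (Real.exp (u / 2 + 3 / 2 * u ^ 2)) := by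
          rw [ENNReal.ofReal_mul zero_le_two, ENNReal.ofReal_ofNat]
  exact (ENNReal.mul_le_mul_iff_right two_ne_zero ENNReal.ofNat_ne_top).mp htwo

lemma lmgf_centered_max_zero_sq_gaussianReal_le {v : NNReal} {t : ℝ} (ht : |t * v| ≤ 1 / 8) :
    lmgf (fun g => max g 0 ^ 2 - v / 2) (gaussianReal 0 v) t ≤
      ENNReal.ofReal (Real.exp (3 / 2 * (t * v) ^ 2)) := by
  simp only [sub_eq_add_neg, lmgf_add_const]
  refine (mul_le_mul_left (lmgf_max_zero_sq_gaussianReal_le ht) _).trans_eq ?_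
  rw [← ENNReal.ofReal_mul (Real.exp_nonneg _), ← Real.exp_add]
  congr 2
  ring

lemma map_sum_pi_gaussianReal {ι : Type*} [Fintype ι] (a : ι → ℝ) (v : ι → NNReal) :
    (Measure.pi fun i => gaussianReal (a i) (v i)).map (fun g => ∑ i, g i) =
      gaussianReal (∑ i, a i) (∑ i, v i) := by
  have hmeas : Measurable fun g : ι → ℝ => ∑ i, g i := by fun_prop
  have := Measure.isProbabilityMeasure_map
    (μ := Measure.pi fun i => gaussianReal (a i) (v i)) hmeas.aemeasurable
  refine Measure.ext_of_charFun (funext fun s => ?_)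
  rw [charFun_map_sum_pi_eq_prod, Finset.prod_apply]
  simp only [charFun_gaussianReal]
  rw [← Complex.exp_sum, Finset.sum_sub_distrib, ← Finset.sum_div, ← Finset.sum_mul,
    ← Finset.sum_mul, ← Finset.mul_sum]
  push_cast
  rfl

lemma map_sum_mul_pi_gaussianReal {ι : Type*} [Fintype ι] (v : NNReal) (h : ι → ℝ) :
    (Measure.pi fun _ : ι => gaussianReal 0 v).map (fun g => ∑ j, g j * h j) =
      gaussianReal 0 (v * ∑ j, ‖h j‖₊ ^ 2) := by
  have hscale : (Measure.pi fun _ : ι => gaussianReal 0 v).map (fun g j => g j * h j) =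
      Measure.pi fun j => gaussianReal 0 (v * ‖h j‖₊ ^ 2) := by
    rw [Measure.pi_map_pi (f := fun j y => y * h j) fun j => by fun_prop]
    congr 1
    funext j
    rw [gaussianReal_map_mul_const, mul_zero]
    congr 1
    ext
    simp [mul_comm]
  have hcomp := Measure.map_map (μ := Measure.pi fun _ : ι => gaussianReal 0 v)
    (g := fun y : ι → ℝ => ∑ j, y j) (f := fun g j => g j * h j) (by fun_prop) (by fun_prop)
  rw [hscale, map_sum_pi_gaussianReal, Finset.sum_const_zero, ← Finset.mul_sum] at hcomp
  exact hcomp.symm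

/-! ### One random layer -/

lemma l2_sq {p : ℕ} (v : Fin p → ℝ) : l2 v ^ 2 = ∑ k, v k ^ 2 :=
  Real.sq_sqrt (Finset.sum_nonneg fun _ _ => sq_nonneg _)

lemma l2_relu_mulVec_sq {p q : ℕ} (G : Fin p → Fin q → ℝ) (h : Fin q → ℝ) :
    l2 (relu (mulVec G h)) ^ 2 = ∑ k, max (∑ j, G k j * h j) 0 ^ 2 :=
  l2_sq _

instance isProbabilityMeasure_gaussMat (p q : ℕ) (v : NNReal) :
    IsProbabilityMeasure (gaussMat p q v) := by
  unfold gaussMat; infer_instance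

lemma lmgf_l2_relu_mulVec_sq_le {p q : ℕ} {v : NNReal} (h : Fin q → ℝ) {t : ℝ}
    (ht : |t * (v * l2 h ^ 2)| ≤ 1 / 8) :
    lmgf (fun G => l2 (relu (mulVec G h)) ^ 2 - p * (v * l2 h ^ 2 / 2)) (gaussMat p q v) t ≤
      ENNReal.ofReal (Real.exp (p * (3 / 2 * (t * (v * l2 h ^ 2)) ^ 2))) := by
  set σ : NNReal := v * ∑ j, ‖h j‖₊ ^ 2
  have hσ : (σ : ℝ) = v * l2 h ^ 2 := by simp [σ, l2_sq]
  rw [← hσ] at ht ⊢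
  have hrow : lmgf (fun g : Fin q → ℝ => max (∑ j, g j * h j) 0 ^ 2 - σ / 2)
      (Measure.pi fun _ => gaussianReal 0 v) t ≤
        ENNReal.ofReal (Real.exp (3 / 2 * (t * σ) ^ 2)) := by
    have hmap := lmgf_map (μ := Measure.pi fun _ : Fin q => gaussianReal 0 v) (t := t)
      (f := fun g => ∑ j, g j * h j) (X := fun y => max y 0 ^ 2 - σ / 2)
      (by fun_prop) (by fun_prop)
    rw [map_sum_mul_pi_gaussianReal] at hmap
    exact hmap.symm.trans_le (lmgf_centered_max_zero_sq_gaussianReal_le ht)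
  have hsum : ∀ G : Fin p → Fin q → ℝ, l2 (relu (mulVec G h)) ^ 2 - p * ((σ : ℝ) / 2) =
      ∑ k, (max (∑ j, G k j * h j) 0 ^ 2 - (σ : ℝ) / 2) := by
    simp [l2_relu_mulVec_sq]
  simp only [hsum]
  refine (lmgf_sum_pi (E := fun _ : Fin p => Fin q → ℝ)
    (X := fun _ g => max (∑ j, g j * h j) 0 ^ 2 - (σ : ℝ) / 2)
    (fun _ => Measure.pi fun _ => gaussianReal 0 v) (fun _ => by fun_prop) t).trans_le ?_
  rw [Finset.prod_const, Finset.card_univ, Fintype.card_fin, Real.exp_nat_mul,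
    ENNReal.ofReal_pow (Real.exp_nonneg _)]
  gcongr

lemma lmgf_l2_relu_mulVec_sq_sub_le {q : ℕ} (hm : 0 < m) {h : Fin q → ℝ} (hh : l2 h ^ 2 ≤ 2)
    {t : ℝ} (ht : |t| ≤ m / 32) :
    lmgf (fun G => l2 (relu (mulVec G h)) ^ 2 - l2 h ^ 2) (gaussMat m q (2 / m)) t ≤
      ENNReal.ofReal (Real.exp (24 * t ^ 2 / m)) := by
  have hm' : (0 : ℝ) < m := by exact_mod_cast hm
  have hmean : (m : ℝ) * (((2 / m : NNReal) : ℝ) * l2 h ^ 2 / 2) = l2 h ^ 2 := by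
    push_cast
    field_simp
  have hvar : |t * (((2 / m : NNReal) : ℝ) * l2 h ^ 2)| ≤ 4 * |t| / m := by
    push_cast
    rw [abs_mul, abs_of_nonneg (by positivity : 0 ≤ 2 / (m : ℝ) * l2 h ^ 2)]
    calc |t| * (2 / m * l2 h ^ 2) ≤ |t| * (2 / m * 2) := by gcongr
      _ = 4 * |t| / m := by ring
  have hsmall : 4 * |t| / m ≤ 1 / 8 := by
    rw [div_le_iff₀ hm']
    linarith
  have hlayer := lmgf_l2_relu_mulVec_sq_le (p := m) h (hvar.trans hsmall)
  rw [hmean] at hlayer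
  refine hlayer.trans (ENNReal.ofReal_le_ofReal (Real.exp_le_exp.mpr ?_))
  calc m * (3 / 2 * (t * (((2 / m : NNReal) : ℝ) * l2 h ^ 2)) ^ 2)
      ≤ m * (3 / 2 * (4 * |t| / m) ^ 2) := by
        gcongr _ * (_ * ?_)
        exact sq_le_sq.mpr (hvar.trans (le_abs_self _))
    _ = 24 * t ^ 2 / m := by
        rw [div_pow, mul_pow, sq_abs]
        field_simp
        ring

/-! ### Freezing a sequence at its exit from an interval -/

section Freeze

variable {ε : ℝ} {u : ℕ → ℝ}

/-- The sequence `u` stopped at the first index where it lies outside `[-ε, ε]`. -/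
def freeze (ε : ℝ) (u : ℕ → ℝ) : ℕ → ℝ
  | 0 => u 0
  | k + 1 => if |freeze ε u k| ≤ ε then u (k + 1) else freeze ε u k

lemma freeze_eq_of_abs_le {k : ℕ} (hk : |freeze ε u k| ≤ ε) : freeze ε u k = u k := by
  cases k with
  | zero => rfl
  | succ k =>
    by_cases h : |freeze ε u k| ≤ ε
    · simp only [freeze, if_pos h]
    · simp only [freeze, if_neg h] at hk
      exact absurd hk h

lemma abs_freeze_le_of_succ {k : ℕ} (hk : |freeze ε u (k + 1)| ≤ ε) : |freeze ε u k| ≤ ε := by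
  by_contra h
  exact h (by simpa only [freeze, if_neg h] using hk)

lemma abs_le_of_abs_freeze_le {j k : ℕ} (hjk : j ≤ k) (hk : |freeze ε u k| ≤ ε) : |u j| ≤ ε := by
  induction k, hjk using Nat.le_induction with
  | base => rwa [← freeze_eq_of_abs_le hk]
  | succ k _ ih => exact ih (abs_freeze_le_of_succ hk)

lemma freeze_succ (ε : ℝ) (u : ℕ → ℝ) (k : ℕ) :
    freeze ε u (k + 1) =
      (if |freeze ε u k| ≤ ε then u (k + 1) - u k else 0) + freeze ε u k := by
  by_cases h : |freeze ε u k| ≤ ε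
  · rw [freeze, if_pos h, if_pos h, freeze_eq_of_abs_le h, sub_add_cancel]
  · simp only [freeze, if_neg h, zero_add]

lemma freeze_congr {u' : ℕ → ℝ} {k : ℕ} (h : ∀ j ≤ k, u j = u' j) :
    freeze ε u k = freeze ε u' k := by
  induction k with
  | zero => exact h 0 le_rfl
  | succ k ih =>
    simp only [freeze, ih fun j hj => h j (hj.trans k.le_succ), h (k + 1) le_rfl]

lemma measurable_freeze {Ω : Type*} [MeasurableSpace Ω] {U : Ω → ℕ → ℝ}
    (hU : ∀ k, Measurable fun ω => U ω k) (k : ℕ) : Measurable fun ω => freeze ε (U ω) k := by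
  induction k with
  | zero => exact hU 0
  | succ k ih =>
    exact Measurable.ite (measurableSet_le (by fun_prop) measurable_const) (hU (k + 1)) ih

end Freeze

/-! ### Propagation through the layers -/

section Network

variable (A : Fin m → Fin 𝔡 → ℝ) (W : Fin L → Fin m → Fin m → ℝ) (x : Fin 𝔡 → ℝ)

lemma hseq_succ {ℓ : ℕ} (hℓ : ℓ < L) :
    hseq A W x (ℓ + 1) = relu (mulVec (W ⟨ℓ, hℓ⟩) (hseq A W x ℓ)) := by
  have h : ℓ + 1 ≤ L := hℓ
  simp [hseq, Wat, h]

lemma hseq_succ_of_le {ℓ : ℕ} (hℓ : L ≤ ℓ) : hseq A W x (ℓ + 1) = hseq A W x ℓ := by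
  have h : ¬ ℓ + 1 ≤ L := by omega
  simp [hseq, h]

/-- `W i` is the weight matrix of layer `i + 1`, hence irrelevant up to layer `i`. -/
lemma hseq_update_of_le (i : Fin L) (w : Fin m → Fin m → ℝ) {ℓ : ℕ} (hℓ : ℓ ≤ i) :
    hseq A (Function.update W i w) x ℓ = hseq A W x ℓ := by
  induction ℓ with
  | zero => rfl
  | succ ℓ ih =>
    have hL : ℓ < L := by omega
    have hne : (⟨ℓ, hL⟩ : Fin L) ≠ i := fun h => by simp [← h] at hℓ
    rw [hseq_succ _ _ _ hL, hseq_succ _ _ _ hL, ih (by omega), Function.update_of_ne hne]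

lemma measurable_hseq (ℓ : ℕ) :
    Measurable fun z : (Fin m → Fin 𝔡 → ℝ) × (Fin L → Fin m → Fin m → ℝ) =>
      hseq z.1 z.2 x ℓ := by
  induction ℓ with
  | zero =>
    unfold hseq relu mulVec
    fun_prop
  | succ ℓ ih =>
    rcases lt_or_ge ℓ L with hℓ | hℓ
    · simp only [hseq_succ _ _ _ hℓ]
      unfold relu mulVec
      fun_prop
    · simpa only [hseq_succ_of_le _ _ _ hℓ] using ih

/-- The deviation `‖h_ℓ‖² - 1` of the squared norm of layer `ℓ` from its mean, which is `1` for a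
unit input `x`. -/
def sqNormDev (ℓ : ℕ) : ℝ := l2 (hseq A W x ℓ) ^ 2 - 1

lemma measurable_freeze_sqNormDev (ε : ℝ) (ℓ : ℕ) :
    Measurable fun z : (Fin m → Fin 𝔡 → ℝ) × (Fin L → Fin m → Fin m → ℝ) =>
      freeze ε (sqNormDev z.1 z.2 x) ℓ := by
  refine measurable_freeze (fun k => ?_) ℓ
  have := measurable_hseq (m := m) (L := L) x k
  simp only [sqNormDev, l2]
  fun_prop

lemma freeze_sqNormDev_update (ε : ℝ) (i : Fin L) (w : Fin m → Fin m → ℝ) :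
    freeze ε (sqNormDev A (Function.update W i w) x) i = freeze ε (sqNormDev A W x) i :=
  freeze_congr fun j hj => by rw [sqNormDev, sqNormDev, hseq_update_of_le A W x i w hj]

variable {x} {ε t : ℝ}

lemma lmgf_freeze_sqNormDev_update_le (hm : 0 < m) (hε : ε ≤ 1) (ht : |t| ≤ m / 32)
    (i : Fin L) :
    lmgf (fun w => freeze ε (sqNormDev A (Function.update W i w) x) (i + 1))
        (gaussMat m m (2 / m)) t ≤
      ENNReal.ofReal (Real.exp (24 * t ^ 2 / m)) *
        ENNReal.ofReal (Real.exp (t * freeze ε (sqNormDev A W x) i)) := by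
  simp only [freeze_succ, freeze_sqNormDev_update, lmgf_add_const]
  gcongr
  by_cases hS : |freeze ε (sqNormDev A W x) i| ≤ ε
  · have hnorm : l2 (hseq A W x i) ^ 2 ≤ 2 := by
      have := (abs_le.mp (freeze_eq_of_abs_le hS ▸ hS)).2
      rw [sqNormDev] at this
      linarith
    have hincr : ∀ w, sqNormDev A (Function.update W i w) x (i + 1) -
        sqNormDev A (Function.update W i w) x i =
          l2 (relu (mulVec w (hseq A W x i))) ^ 2 - l2 (hseq A W x i) ^ 2 := by
      intro w
      simp only [sqNormDev, hseq_succ _ _ _ i.isLt, Fin.eta, Function.update_self,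
        hseq_update_of_le A W x i w le_rfl, sub_sub_sub_cancel_right]
    simp only [if_pos hS, hincr]
    exact lmgf_l2_relu_mulVec_sq_sub_le hm hnorm ht
  · simp only [if_neg hS, lmgf, mul_zero, Real.exp_zero, ENNReal.ofReal_one, lintegral_one,
      measure_univ, ENNReal.one_le_ofReal]
    exact Real.one_le_exp (by positivity)

lemma lmgf_freeze_sqNormDev_pi_le (hm : 0 < m) (hε : ε ≤ 1) (ht : |t| ≤ m / 32) {ℓ : ℕ}
    (hℓ : ℓ ≤ L) :
    lmgf (fun W : Fin L → Fin m → Fin m → ℝ => freeze ε (sqNormDev A W x) ℓ)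
        (Measure.pi fun _ => gaussMat m m (2 / m)) t ≤
      ENNReal.ofReal (Real.exp (24 * t ^ 2 / m)) ^ ℓ *
        ENNReal.ofReal (Real.exp (t * (l2 (relu (mulVec A x)) ^ 2 - 1))) := by
  have hmeas : ∀ k, Measurable fun W : Fin L → Fin m → Fin m → ℝ =>
      freeze ε (sqNormDev A W x) k :=
    fun k => Measurable.of_uncurry_left
      (f := fun A (W : Fin L → Fin m → Fin m → ℝ) => freeze ε (sqNormDev A W x) k)
      (measurable_freeze_sqNormDev x ε k)
  induction ℓ with
  | zero => simp [freeze, sqNormDev, hseq, lmgf]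
  | succ ℓ ih =>
    rw [pow_succ', mul_assoc]
    have hlayer := lmgf_pi_le_mul (E := fun _ : Fin L => Fin m → Fin m → ℝ)
      (fun _ => gaussMat m m (2 / m)) (hmeas (ℓ + 1)) (hmeas ℓ) ⟨ℓ, hℓ⟩
      (fun W w => freeze_sqNormDev_update A W x ε ⟨ℓ, hℓ⟩ w)
      (fun W => lmgf_freeze_sqNormDev_update_le A W hm hε ht ⟨ℓ, hℓ⟩)
    exact hlayer.trans
      (mul_le_mul_right (ih (by omega)) _)

lemma lmgf_freeze_sqNormDev_le (hm : 0 < m) (hx : l2 x = 1) (hε : ε ≤ 1) (ht : |t| ≤ m / 32) :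
    lmgf (fun z => freeze ε (sqNormDev z.1 z.2 x) L) (initAW 𝔡 m L) t ≤
      ENNReal.ofReal (Real.exp ((L + 1) * (24 * t ^ 2 / m))) := by
  have hinput : lmgf (fun A => l2 (relu (mulVec A x)) ^ 2 - 1) (gaussMat m 𝔡 (2 / m)) t ≤
      ENNReal.ofReal (Real.exp (24 * t ^ 2 / m)) := by
    simpa [hx] using lmgf_l2_relu_mulVec_sq_sub_le hm (h := x) (by norm_num [hx]) ht
  have hmeas := measurable_freeze_sqNormDev (m := m) (L := L) x ε L
  calc lmgf (fun z => freeze ε (sqNormDev z.1 z.2 x) L) (initAW 𝔡 m L) t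
      = ∫⁻ A, lmgf (fun W => freeze ε (sqNormDev A W x) L)
          (Measure.pi fun _ => gaussMat m m (2 / m)) t ∂gaussMat m 𝔡 (2 / m) :=
        lintegral_prod _ (hmeas.const_mul t).exp.ennreal_ofReal.aemeasurable
    _ ≤ ∫⁻ A, ENNReal.ofReal (Real.exp (24 * t ^ 2 / m)) ^ L *
          ENNReal.ofReal (Real.exp (t * (l2 (relu (mulVec A x)) ^ 2 - 1)))
            ∂gaussMat m 𝔡 (2 / m) :=
        lintegral_mono fun A => lmgf_freeze_sqNormDev_pi_le A hm hε ht le_rfl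
    _ ≤ ENNReal.ofReal (Real.exp (24 * t ^ 2 / m)) ^ L *
          ENNReal.ofReal (Real.exp (24 * t ^ 2 / m)) := by
        rw [lintegral_const_mul' _ _ (ENNReal.pow_ne_top ENNReal.ofReal_ne_top)]
        exact mul_le_mul_right hinput _
    _ = ENNReal.ofReal (Real.exp ((L + 1) * (24 * t ^ 2 / m))) := by
        rw [← pow_succ, ← ENNReal.ofReal_pow (Real.exp_nonneg _), ← Real.exp_nat_mul]
        push_cast
        rfl

lemma initAW_not_forall_abs_sqNormDev_le (hm : 0 < m) (hx : l2 x = 1) (hε₀ : 0 ≤ ε)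
    (hε₁ : ε ≤ 1) :
    initAW 𝔡 m L {z | ¬ ∀ ℓ ≤ L, |sqNormDev z.1 z.2 x ℓ| ≤ ε} ≤
      ENNReal.ofReal (2 * Real.exp (-(m * ε ^ 2 / (96 * (L + 1))))) := by
  have hm' : (0 : ℝ) < m := by exact_mod_cast hm
  -- The minimizer of the Chernoff exponent `24 t² (L + 1) / m - t ε`.
  set t : ℝ := m * ε / (48 * (L + 1)) with ht_def
  have ht₀ : 0 ≤ t := by positivity
  have ht : |t| ≤ m / 32 := by
    rw [abs_of_nonneg ht₀, ht_def, div_le_div_iff₀ (by positivity) (by norm_num)]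
    have : (0 : ℝ) ≤ L := L.cast_nonneg
    nlinarith [mul_le_mul_of_nonneg_left hε₁ hm'.le, mul_nonneg hm'.le this]
  have hsub : {z : (Fin m → Fin 𝔡 → ℝ) × (Fin L → Fin m → Fin m → ℝ) |
      ¬ ∀ ℓ ≤ L, |sqNormDev z.1 z.2 x ℓ| ≤ ε} ⊆
        {z | ε ≤ |freeze ε (sqNormDev z.1 z.2 x) L|} := by
    intro z hz
    by_contra hlt
    exact hz fun ℓ hℓ => abs_le_of_abs_freeze_le hℓ (not_le.mp hlt).le
  have hneg := lmgf_freeze_sqNormDev_le (L := L) hm hx hε₁ (t := -t) (by rwa [abs_neg])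
  rw [neg_sq] at hneg
  calc initAW 𝔡 m L {z | ¬ ∀ ℓ ≤ L, |sqNormDev z.1 z.2 x ℓ| ≤ ε}
      ≤ initAW 𝔡 m L {z | ε ≤ |freeze ε (sqNormDev z.1 z.2 x) L|} := measure_mono hsub
    _ ≤ (ENNReal.ofReal (Real.exp ((L + 1) * (24 * t ^ 2 / m))) +
          ENNReal.ofReal (Real.exp ((L + 1) * (24 * t ^ 2 / m)))) *
            ENNReal.ofReal (Real.exp (-(t * ε))) :=
        (measure_le_abs_le_lmgf_mul_exp
          (measurable_freeze_sqNormDev x ε L).aemeasurable ht₀ ε).trans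
          (mul_le_mul_left (add_le_add (lmgf_freeze_sqNormDev_le hm hx hε₁ ht) hneg) _)
    _ = ENNReal.ofReal
        (2 * (Real.exp ((L + 1) * (24 * t ^ 2 / m)) * Real.exp (-(t * ε)))) := by
        rw [← two_mul, ENNReal.ofReal_mul zero_le_two, ENNReal.ofReal_mul (Real.exp_nonneg _),
          ENNReal.ofReal_ofNat, mul_assoc]
    _ = ENNReal.ofReal (2 * Real.exp (-(m * ε ^ 2 / (96 * (L + 1))))) := by
        rw [← Real.exp_add, ht_def]
        congr 3
        field_simp
        ring

end Network

lemma abs_sub_one_le_abs_sq_sub_one {a : ℝ} (ha : 0 ≤ a) : |a - 1| ≤ |a ^ 2 - 1| := by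
  calc |a - 1| ≤ |a - 1| * (a + 1) := le_mul_of_one_le_right (abs_nonneg _) (by linarith)
    _ = |a ^ 2 - 1| := by
      rw [← abs_of_nonneg (by linarith : 0 ≤ a + 1), ← abs_mul]
      congr 1
      ring

theorem statement5_general {n : ℕ} (hm : 0 < m) (x : Fin n → Fin 𝔡 → ℝ) (hx : ∀ i, l2 (x i) = 1)
    {ε : ℝ} (hε₀ : 0 ≤ ε) (hε₁ : ε ≤ 1) :
    ENNReal.ofReal (1 - 2 * n * Real.exp (-(m * ε ^ 2 / (96 * (L + 1))))) ≤
      initAW 𝔡 m L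
        {z | ∀ (i : Fin n) (ℓ : ℕ), ℓ ≤ L →
          1 - ε ≤ l2 (hseq z.1 z.2 (x i) ℓ) ∧ l2 (hseq z.1 z.2 (x i) ℓ) ≤ 1 + ε} := by
  have : IsProbabilityMeasure (initAW 𝔡 m L) := by unfold initAW; infer_instance
  have hunion := ofReal_one_sub_card_mul_le_measure_forall (μ := initAW 𝔡 m L)
    (by positivity) fun i => initAW_not_forall_abs_sqNormDev_le hm (hx i) hε₀ hε₁
  rw [Fintype.card_fin, ← mul_assoc, mul_comm (n : ℝ) 2] at hunion
  refine hunion.trans (measure_mono fun z hz i ℓ hℓ => ?_)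
  have hdev : |l2 (hseq z.1 z.2 (x i) ℓ) - 1| ≤ ε :=
    (abs_sub_one_le_abs_sq_sub_one (Real.sqrt_nonneg _)).trans (hz i ℓ hℓ)
  constructor <;> linarith [abs_le.mp hdev]

lemma two_mul_exp_neg_div_succ_le {k a : ℝ} (hk : 0 ≤ k) (ha : 0 ≤ a) (hL : 0 < L) :
    2 * k * Real.exp (-(a / (96 * (L + 1)))) ≤
      2 * k * L * Real.exp (-(1 / 192 * a / L)) := by
  have hL₁ : (1 : ℝ) ≤ L := by exact_mod_cast hL
  have hexp : 1 / 192 * a / L ≤ a / (96 * (L + 1)) := by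
    rw [div_mul_eq_mul_div, one_mul, div_div]
    exact div_le_div_of_nonneg_left ha (by positivity) (by linarith)
  calc 2 * k * Real.exp (-(a / (96 * (L + 1))))
      ≤ 2 * k * Real.exp (-(1 / 192 * a / L)) := by gcongr
    _ ≤ 2 * k * L * Real.exp (-(1 / 192 * a / L)) :=
      mul_le_mul_of_nonneg_right (le_mul_of_one_le_right (by positivity) hL₁) (Real.exp_nonneg _)

/-- Lemma 7.1, forward propagation at random initialization. -/
theorem statement5 :
    ∃ C c : ℝ, 0 < C ∧ 0 < c ∧
      ∀ (𝔡 m L n : ℕ) (h𝔡 : 0 < 𝔡) (hL : 2 ≤ L) (hn : 0 < n),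
        C ≤ (m : ℝ) →
        ∀ (x : Fin n → Fin 𝔡 → ℝ), (∀ i, l2 (x i) = 1) →
        ∀ ε : ℝ, 0 < ε → ε ≤ 1 →
        ENNReal.ofReal (1 - C * (n : ℝ) * (L : ℝ) *
            Real.exp (-(c * (m : ℝ) * ε ^ 2 / (L : ℝ)))) ≤
          initAW 𝔡 m L
            {z | ∀ (i : Fin n) (ℓ : ℕ), ℓ ≤ L →
              1 - ε ≤ l2 (hseq z.1 z.2 (x i) ℓ) ∧ l2 (hseq z.1 z.2 (x i) ℓ) ≤ 1 + ε} := by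
  refine ⟨2, 1 / 192, by norm_num, by norm_num, ?_⟩
  intro 𝔡 m L n h𝔡 hL hn hm x hx ε hε₀ hε₁
  have hm₀ : 0 < m := Nat.cast_pos.mp (zero_lt_two.trans_le hm)
  refine le_trans (ENNReal.ofReal_le_ofReal (sub_le_sub_left ?_ 1))
    (statement5_general hm₀ x hx hε₀.le hε₁)
  simpa only [mul_assoc] using
    two_mul_exp_neg_div_succ_le n.cast_nonneg (by positivity : 0 ≤ (m : ℝ) * ε ^ 2)
      (zero_lt_two.trans_le hL)

end DNNPaper
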